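/- arXiv:0903.4969 — 2 statements merged into one kernel-verified Lean document; each statement's English description precedes it below -/
import Mathlib

section
/- In 𝔽₂[t₁,…,t₅], the product ∏_{1≤j<k≤5} (1 + t_j + t_k) is congruent to 1 + e₄ modulo the ideal generated by e₁, e₂, e₃, e₅. -/
open MvPolynomial Finset

/-- The `i`-th elementary symmetric polynomial in `𝔽₂[t₁,…,t₅]`. -/
noncomputable def e (i : ℕ) : MvPolynomial (Fin 5) (ZMod 2) :=
  esymm (Fin 5) (ZMod 2) i

/-!
A symmetric polynomial in `p ^ k + 1` variables over a ring of characteristic `p` is congruent to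
`q(e_{p ^ k})` for a one-variable polynomial `q`, modulo the ideal generated by the other `e_i`.
The point `(0, c, …, c)` kills these other `e_i` and sends `e_{p ^ k}` to `c ^ (p ^ k)`, because
`p` divides the intermediate binomial coefficients. As `c` is transcendental, evaluating there
determines `q`. In characteristic two the pairs `(c, c)` contribute `1 + c + c = 1` to
`∏ (1 + t_i + t_j)` and the `2 ^ k` pairs `(0, c)` contribute `(1 + c) ^ (2 ^ k) = 1 + c ^ (2 ^ k)`,
whence `q(y) = 1 + y`.
-/

section Reduction

variable {σ R A : Type*} [Fintype σ] [CommRing R] [CommRing A] [Algebra R A]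

variable (σ R) in
/-- The ideal `(e_i : 1 ≤ i ≤ |σ|, i ≠ m)`, which imposes the vanishing of all elementary
symmetric polynomials of positive degree other than the `m`-th. -/
noncomputable def esymmIdealExcept (m : ℕ) : Ideal (MvPolynomial σ R) :=
  Ideal.span (esymm σ R '' (Set.Icc 1 (Fintype.card σ) \ {m}))

lemma exists_sub_aeval_esymm_mem_esymmIdealExcept {f : MvPolynomial σ R} (hf : f.IsSymmetric)
    (m : ℕ) :
    ∃ q : Polynomial R, f - Polynomial.aeval (esymm σ R m) q ∈ esymmIdealExcept σ R m := by
  obtain ⟨P, hP⟩ := esymmAlgHom_surjective R (σ := σ) le_rfl ⟨f, hf⟩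
  have hfP : aeval (fun i : Fin (Fintype.card σ) ↦ esymm σ R (i + 1)) P = f := by
    rw [← esymmAlgHom_apply, hP]
  let keep (i : Fin (Fintype.card σ)) : Polynomial R := if i + 1 = m then Polynomial.X else 0
  let π := Ideal.Quotient.mkₐ R (esymmIdealExcept σ R m)
  have hπ : π.comp (aeval fun i : Fin (Fintype.card σ) ↦ esymm σ R (i + 1)) =
      (π.comp (Polynomial.aeval (esymm σ R m))).comp (aeval keep) := by
    ext i
    by_cases hi : (i : ℕ) + 1 = m
    · simp [keep, hi]
    · have hmem : esymm σ R (i + 1) ∈ esymmIdealExcept σ R m :=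
        Ideal.subset_span ⟨_, ⟨⟨by omega, i.isLt⟩, hi⟩, rfl⟩
      simpa [keep, hi, π] using Ideal.Quotient.eq_zero_iff_mem.mpr hmem
  refine ⟨aeval keep P, Ideal.Quotient.eq.mp ?_⟩
  rw [← hfP]
  exact DFunLike.congr_fun hπ P

lemma mem_esymmIdealExcept_iff_map_eq_zero {m : ℕ} {φ : MvPolynomial σ R →ₐ[R] A}
    (hφ : esymmIdealExcept σ R m ≤ RingHom.ker φ) (hm : Transcendental R (φ (esymm σ R m)))
    {f : MvPolynomial σ R} (hf : f.IsSymmetric) : f ∈ esymmIdealExcept σ R m ↔ φ f = 0 := by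
  refine ⟨fun h ↦ hφ h, fun h ↦ ?_⟩
  obtain ⟨q, hq⟩ := exists_sub_aeval_esymm_mem_esymmIdealExcept hf m
  have hq_aeval : Polynomial.aeval (φ (esymm σ R m)) q = 0 := by
    simpa [h, Polynomial.aeval_algHom_apply] using hφ hq
  simpa [transcendental_iff.mp hm q hq_aeval] using hq

end Reduction

lemma multiset_esymm_zero_cons {R : Type*} [CommSemiring R] (s : Multiset R) (i : ℕ) :
    (0 ::ₘ s).esymm i = s.esymm i := by
  cases i <;> simp [Multiset.esymm]

lemma multiset_esymm_replicate {R : Type*} [CommSemiring R] (n : ℕ) (c : R) (i : ℕ) :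
    (Multiset.replicate n c).esymm i = n.choose i * c ^ i := by
  have hprod : ∀ s ∈ (Multiset.replicate n c).powersetCard i, s.prod = c ^ i := by
    intro s hs
    obtain ⟨hle, hcard⟩ := Multiset.mem_powersetCard.mp hs
    obtain ⟨j, -, rfl⟩ := Multiset.le_replicate_iff.mp hle
    simp_all
  simp [Multiset.esymm, Multiset.map_congr rfl hprod]

lemma aeval_vecCons_zero_const_esymm {R A : Type*} [CommSemiring R] [CommSemiring A] [Algebra R A]
    (n : ℕ) (c : A) (i : ℕ) :
    aeval (Matrix.vecCons 0 fun _ : Fin n ↦ c) (esymm (Fin (n + 1)) R i) =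
      n.choose i * c ^ i := by
  have hval : univ.val.map (Matrix.vecCons 0 fun _ : Fin n ↦ c) =
      0 ::ₘ Multiset.replicate n c := by
    simp [Fin.univ_val_map, List.ofFn_succ, ← Multiset.cons_coe, ← Multiset.coe_replicate]
  rw [aeval_esymm_eq_multiset_esymm, hval, multiset_esymm_zero_cons, multiset_esymm_replicate]

section Specialization

variable {R A : Type*} [CommRing R] [CommRing A] [Algebra R A]
  (p : ℕ) [hp : Fact p.Prime] [CharP R p]

lemma esymmIdealExcept_le_ker_aeval_vecCons (k : ℕ) (c : A) :
    esymmIdealExcept (Fin (p ^ k + 1)) R (p ^ k) ≤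
      RingHom.ker (aeval (R := R) (Matrix.vecCons 0 fun _ : Fin (p ^ k) ↦ c)) := by
  refine Ideal.span_le.mpr ?_
  rintro _ ⟨i, ⟨⟨hi, -⟩, hik⟩, rfl⟩
  have hchoose : ((p ^ k).choose i : R) = 0 :=
    (CharP.cast_eq_zero_iff R p _).mpr (hp.out.dvd_choose_pow (by omega) hik)
  have hchoose' : ((p ^ k).choose i : A) = 0 := by
    simpa using congrArg (algebraMap R A) hchoose
  simp [aeval_vecCons_zero_const_esymm, hchoose']

theorem mem_esymmIdealExcept_iff_aeval_vecCons_eq_zero {k : ℕ}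
    {f : MvPolynomial (Fin (p ^ k + 1)) R} (hf : f.IsSymmetric) :
    f ∈ esymmIdealExcept (Fin (p ^ k + 1)) R (p ^ k) ↔
      aeval (Matrix.vecCons 0 fun _ : Fin (p ^ k) ↦ (Polynomial.X : Polynomial R)) f = 0 := by
  have : Nontrivial R := CharP.nontrivial_of_char_ne_one hp.out.ne_one
  refine mem_esymmIdealExcept_iff_map_eq_zero
    (esymmIdealExcept_le_ker_aeval_vecCons p k Polynomial.X) ?_ hf
  rw [aeval_vecCons_zero_const_esymm, Nat.choose_self, Nat.cast_one, one_mul]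
  exact (Polynomial.transcendental_X R).pow (pow_pos hp.out.pos k)

end Specialization

lemma prod_filter_lt_eq_prod_not_isDiag {ι M : Type*} [Fintype ι] [LinearOrder ι] [CommMonoid M]
    (f : Sym2 ι → M) :
    ∏ p : ι × ι with p.1 < p.2, f s(p.1, p.2) = ∏ z with ¬ z.IsDiag, f z := by
  have hoffDiag : (univ : Finset ι).offDiag.filter (fun p ↦ p.1 < p.2) =
      univ.filter fun p ↦ p.1 < p.2 := by
    ext p
    simpa using ne_of_lt
  rw [← hoffDiag, ← sym2_univ]
  exact (sum_sym2_filter_not_isDiag (M := Additive M) univ f).symm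

section ExteriorSquare

variable {ι A B : Type*} [Fintype ι] [LinearOrder ι] [CommSemiring A] [CommSemiring B]

/-- The total Stiefel–Whitney class `∏_{i < j} (1 + t_i + t_j)` of the second exterior power of a
bundle with Stiefel–Whitney roots `t`, as given by the splitting principle. -/
def exteriorSquareClass (t : ι → A) : A :=
  ∏ p : ι × ι with p.1 < p.2, (1 + t p.1 + t p.2)

lemma map_exteriorSquareClass {F : Type*} [FunLike F A B] [RingHomClass F A B] (φ : F)
    (t : ι → A) : φ (exteriorSquareClass t) = exteriorSquareClass (φ ∘ t) := by
  simp [exteriorSquareClass]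

lemma exteriorSquareClass_comp_perm (t : ι → A) (s : Equiv.Perm ι) :
    exteriorSquareClass (t ∘ s) = exteriorSquareClass t := by
  let pairFactor : Sym2 ι → A :=
    Sym2.lift ⟨fun i j ↦ 1 + t i + t j, fun i j ↦ add_right_comm 1 (t i) (t j)⟩
  calc exteriorSquareClass (t ∘ s)
      = ∏ z : Sym2 ι with ¬ z.IsDiag, pairFactor (z.map s) :=
        prod_filter_lt_eq_prod_not_isDiag fun z ↦ pairFactor (z.map s)
    _ = ∏ z : Sym2 ι with ¬ z.IsDiag, pairFactor z := by
        refine prod_bijective (Sym2.map s) ?_ (by simp [Sym2.isDiag_map s.injective]) (by simp)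
        exact Finite.injective_iff_bijective.mp (Sym2.map.injective s.injective)
    _ = exteriorSquareClass t := (prod_filter_lt_eq_prod_not_isDiag pairFactor).symm

lemma aeval_exteriorSquareClass_X [Algebra A B] (t : ι → B) :
    aeval t (exteriorSquareClass (X : ι → MvPolynomial ι A)) = exteriorSquareClass t := by
  simp [map_exteriorSquareClass, Function.comp_def]

lemma isSymmetric_exteriorSquareClass_X :
    (exteriorSquareClass (X : ι → MvPolynomial ι A)).IsSymmetric := by
  intro s
  calc rename s (exteriorSquareClass X)
      = exteriorSquareClass (X ∘ s) := by simp [map_exteriorSquareClass, Function.comp_def]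
    _ = exteriorSquareClass X := exteriorSquareClass_comp_perm X s

lemma exteriorSquareClass_vecCons {n : ℕ} (a : A) (t : Fin n → A) :
    exteriorSquareClass (Matrix.vecCons a t) = (∏ i, (1 + a + t i)) * exteriorSquareClass t := by
  simp [exteriorSquareClass, prod_filter, Fintype.prod_prod_type, Fin.prod_univ_succ]

lemma exteriorSquareClass_const [CharP A 2] (c : A) :
    exteriorSquareClass (fun _ : ι ↦ c) = 1 := by
  simp [exteriorSquareClass, add_assoc, CharTwo.add_self_eq_zero]

lemma exteriorSquareClass_vecCons_zero_const [CharP A 2] (k : ℕ) (c : A) :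
    exteriorSquareClass (Matrix.vecCons 0 fun _ : Fin (2 ^ k) ↦ c) = 1 + c ^ 2 ^ k := by
  simp [exteriorSquareClass_vecCons, exteriorSquareClass_const, add_pow_char_pow]

end ExteriorSquare

theorem lambda2_spin5_general (R : Type*) [CommRing R] [CharP R 2] (k : ℕ) :
    exteriorSquareClass X - (1 + esymm (Fin (2 ^ k + 1)) R (2 ^ k)) ∈
      esymmIdealExcept (Fin (2 ^ k + 1)) R (2 ^ k) := by
  have hsymm : (exteriorSquareClass X - (1 + esymm (Fin (2 ^ k + 1)) R (2 ^ k))).IsSymmetric :=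
    isSymmetric_exteriorSquareClass_X.sub (.add .one (esymm_isSymmetric _ _ _))
  rw [mem_esymmIdealExcept_iff_aeval_vecCons_eq_zero 2 hsymm]
  simp only [map_sub, map_add, map_one, aeval_exteriorSquareClass_X,
    exteriorSquareClass_vecCons_zero_const, aeval_vecCons_zero_const_esymm,
    Nat.choose_self, Nat.cast_one, one_mul, sub_self]

lemma esymmIdealExcept_four_eq_span_e :
    esymmIdealExcept (Fin 5) (ZMod 2) 4 = Ideal.span {e 1, e 2, e 3, e 5} := by
  have hdegrees : Set.Icc 1 5 \ {4} = ({1, 2, 3, 5} : Set ℕ) := by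
    ext i
    simp only [Set.mem_sdiff, Set.mem_Icc, Set.mem_insert_iff, Set.mem_singleton_iff]
    omega
  simp [esymmIdealExcept, hdegrees, Set.image_insert_eq, e]

/-- in `𝔽₂[t₁,…,t₅]`, `∏_{1≤j<k≤5} (1 + t_j + t_k)` is congruent
to `1 + e₄` modulo the ideal `(e₁, e₂, e₃, e₅)`. -/
theorem lambda2_spin5 :
    (∏ p ∈ univ.filter (fun p : Fin 5 × Fin 5 => p.1 < p.2),
        (1 + X p.1 + X p.2) : MvPolynomial (Fin 5) (ZMod 2))
      - (1 + e 4) ∈ Ideal.span {e 1, e 2, e 3, e 5} := by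
  rw [← esymmIdealExcept_four_eq_span_e]
  exact lambda2_spin5_general (ZMod 2) 2
end

section
/- In 𝔽₂[t₁,…,t₅], the product ∏_{1≤j<k≤5} (1 + t_j + t_k) is congruent to 1 + e₂ + e₃ + (e₄ + e₂²) + e₅ + (e₃² + e₂³) + e₂²e₃ + (e₃e₅ + e₂²e₄ + e₂e₃²) + (e₃³ + e₂²e₅) + (e₅² + e₂e₃e₅ + e₃²e₄) modulo the ideal generated by e₁. -/
open MvPolynomial Finset

/-! The Chern roots of `λ²(L ⊕ V)`, for a line bundle `L`, are those of `λ² V` together with those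
of `L ⊗ V`, so adjoining a Chern root `a` to `s` multiplies the total Chern class of `λ²` by
`∏ x ∈ s, (1 + a + x)`, a polynomial in `a` and the elementary symmetric functions of `s`. Splitting
off one root at a time expresses `c(λ²)` in ranks 3, 4 and 5 through Chern classes without ever
expanding in the roots. The formulas hold over `ℤ`; the one for `SU(5)` is then reduced mod 2. -/

section EsymmMultiset

variable {R S : Type*} [CommSemiring R] [CommSemiring S]

theorem multiset_esymm_zero (s : Multiset R) : s.esymm 0 = 1 := by
  simp [Multiset.esymm]

theorem multiset_esymm_cons_succ (a : R) (s : Multiset R) (k : ℕ) :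
    (a ::ₘ s).esymm (k + 1) = s.esymm (k + 1) + a * s.esymm k := by
  simp [Multiset.esymm, Multiset.powersetCard_cons, Multiset.sum_map_mul_left]

theorem multiset_esymm_eq_zero_of_card_lt {s : Multiset R} {k : ℕ} (h : s.card < k) :
    s.esymm k = 0 := by
  simp [Multiset.esymm, Multiset.powersetCard_eq_empty k h]

theorem map_multiset_esymm (f : R →+* S) (s : Multiset R) (k : ℕ) :
    f (s.esymm k) = (s.map f).esymm k := by
  simp [Multiset.esymm, Multiset.powersetCard_map, map_multiset_sum, map_multiset_prod]

theorem prod_map_add_eq_sum_esymm (x : R) (s : Multiset R) :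
    (s.map (x + ·)).prod = ∑ j ∈ range (s.card + 1), s.esymm j * x ^ (s.card - j) := by
  simpa [Polynomial.eval_multiset_prod, Polynomial.eval_finsetSum] using
    congrArg (Polynomial.eval x) s.prod_X_add_C_eq_sum_esymm

end EsymmMultiset

theorem prod_powersetCard_two {σ M : Type*} [LinearOrder σ] [Fintype σ] [CommMonoid M]
    (f : Finset σ → M) :
    ∏ s ∈ powersetCard 2 univ, f s =
      ∏ p ∈ univ.filter (fun p : σ × σ => p.1 < p.2), f {p.1, p.2} := by
  symm
  refine prod_bij (fun p _ => {p.1, p.2}) ?_ ?_ ?_ fun _ _ => rfl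
  · rintro ⟨i, j⟩ hij
    simp only [mem_filter_univ] at hij
    simp [mem_powersetCard, card_pair hij.ne]
  · rintro ⟨i, j⟩ hij ⟨k, l⟩ hkl h
    simp only [mem_filter_univ] at hij hkl
    have hpair : ({i, j} : Set σ) = {k, l} := by simpa only [coe_pair] using coe_inj.mpr h
    rcases Set.pair_eq_pair_iff.mp hpair with ⟨rfl, rfl⟩ | ⟨rfl, rfl⟩
    · rfl
    · exact absurd hij hkl.not_gt
  · intro s hs
    obtain ⟨i, j, hij, rfl⟩ := card_eq_two.mp (mem_powersetCard.mp hs).2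
    rcases hij.lt_or_gt with hlt | hgt
    · exact ⟨(i, j), by simpa using hlt, rfl⟩
    · exact ⟨(j, i), by simpa using hgt, pair_comm j i⟩

/-- The total Chern class `∏ (1 + x + y)` of the exterior square of a bundle with Chern roots `s`.
The product runs over the unordered pairs `{x, y}` of roots, as two-element submultisets of `s`,
so that repeated roots are counted with multiplicity. -/
def exteriorSquareChern {R : Type*} [CommSemiring R] (s : Multiset R) : R :=
  ((s.powersetCard 2).map fun p => 1 + p.sum).prod

section CommSemiring

variable {R S : Type*} [CommSemiring R] [CommSemiring S]

theorem map_exteriorSquareChern (f : R →+* S) (s : Multiset R) :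
    f (exteriorSquareChern s) = exteriorSquareChern (s.map f) := by
  simp [exteriorSquareChern, Multiset.powersetCard_map, map_multiset_sum, map_multiset_prod]

theorem exteriorSquareChern_cons (a : R) (s : Multiset R) :
    exteriorSquareChern (a ::ₘ s) =
      exteriorSquareChern s *
        ∑ j ∈ range (s.card + 1), s.esymm j * (1 + a) ^ (s.card - j) := by
  rw [← prod_map_add_eq_sum_esymm]
  simp [exteriorSquareChern, Multiset.powersetCard_cons, Multiset.powersetCard_one, add_assoc]

theorem exteriorSquareChern_of_card_eq_two {s : Multiset R} (hs : s.card = 2) :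
    exteriorSquareChern s = 1 + s.esymm 1 := by
  obtain ⟨a, b, rfl⟩ := Multiset.card_eq_two.mp hs
  simp [exteriorSquareChern, Multiset.powersetCard_cons, Multiset.powersetCard_one]

theorem prod_lt_eq_exteriorSquareChern {σ : Type*} [LinearOrder σ] [Fintype σ] (t : σ → R) :
    ∏ p ∈ univ.filter (fun p : σ × σ => p.1 < p.2), (1 + t p.1 + t p.2) =
      exteriorSquareChern (univ.val.map t) := by
  have hpowerset : exteriorSquareChern (univ.val.map t) =
      ∏ s ∈ powersetCard 2 univ, (1 + ∑ i ∈ s, t i) := by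
    simp only [exteriorSquareChern, Multiset.powersetCard_map, ← map_val_val_powersetCard,
      Multiset.map_map, Function.comp_def, Finset.prod, Finset.sum]
  rw [hpowerset, prod_powersetCard_two]
  refine prod_congr rfl fun p hp => ?_
  rw [sum_pair ((mem_filter_univ p).mp hp).ne, add_assoc]

end CommSemiring

section CommRing

variable {R : Type*} [CommRing R] {s : Multiset R}

theorem exteriorSquareChern_of_card_eq_three (hs : s.card = 3) :
    exteriorSquareChern s =
      (1 + s.esymm 1) ^ 2 + s.esymm 2 * (1 + s.esymm 1) - s.esymm 3 := by
  obtain ⟨a, t, rfl, ht⟩ := Multiset.card_eq_succ_iff.mp hs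
  have ht₃ : t.esymm 3 = 0 := multiset_esymm_eq_zero_of_card_lt (by lia)
  simp only [exteriorSquareChern_cons, exteriorSquareChern_of_card_eq_two ht, ht,
    sum_range_succ, sum_range_zero, multiset_esymm_cons_succ, multiset_esymm_zero, ht₃]
  ring

theorem exteriorSquareChern_of_card_eq_four (hs : s.card = 4) :
    exteriorSquareChern s =
      1 + 3 * s.esymm 1 + (3 * s.esymm 1 ^ 2 + 2 * s.esymm 2)
        + (s.esymm 1 ^ 3 + 4 * s.esymm 1 * s.esymm 2)
        + (2 * s.esymm 1 ^ 2 * s.esymm 2 + s.esymm 2 ^ 2 + s.esymm 1 * s.esymm 3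
          - 4 * s.esymm 4)
        + (s.esymm 1 * s.esymm 2 ^ 2 + s.esymm 1 ^ 2 * s.esymm 3 - 4 * s.esymm 1 * s.esymm 4)
        + (s.esymm 1 * s.esymm 2 * s.esymm 3 - s.esymm 1 ^ 2 * s.esymm 4 - s.esymm 3 ^ 2) := by
  obtain ⟨a, t, rfl, ht⟩ := Multiset.card_eq_succ_iff.mp hs
  have ht₄ : t.esymm 4 = 0 := multiset_esymm_eq_zero_of_card_lt (by lia)
  simp only [exteriorSquareChern_cons, exteriorSquareChern_of_card_eq_three ht, ht,
    sum_range_succ, sum_range_zero, multiset_esymm_cons_succ, multiset_esymm_zero, ht₄]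
  ring

theorem exteriorSquareChern_of_card_eq_five_of_esymm_one_eq_zero
    (hs : s.card = 5) (h₁ : s.esymm 1 = 0) :
    exteriorSquareChern s =
      1 + 3 * s.esymm 2 + s.esymm 3 + (3 * s.esymm 2 ^ 2 - 3 * s.esymm 4)
        + (2 * s.esymm 2 * s.esymm 3 - 11 * s.esymm 5)
        + (s.esymm 2 ^ 3 - s.esymm 3 ^ 2 - 2 * s.esymm 2 * s.esymm 4)
        + (s.esymm 2 ^ 2 * s.esymm 3 - 4 * s.esymm 3 * s.esymm 4 - 4 * s.esymm 2 * s.esymm 5)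
        + (s.esymm 2 ^ 2 * s.esymm 4 - s.esymm 2 * s.esymm 3 ^ 2 + 7 * s.esymm 3 * s.esymm 5
          - 4 * s.esymm 4 ^ 2)
        + (4 * s.esymm 4 * s.esymm 5 - s.esymm 3 ^ 3 - s.esymm 2 ^ 2 * s.esymm 5)
        + (s.esymm 2 * s.esymm 3 * s.esymm 5 - s.esymm 3 ^ 2 * s.esymm 4 - s.esymm 5 ^ 2) := by
  obtain ⟨a, t, rfl, ht⟩ := Multiset.card_eq_succ_iff.mp hs
  have ht₅ : t.esymm 5 = 0 := multiset_esymm_eq_zero_of_card_lt (by lia)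
  have ha : a = -t.esymm 1 := by
    rw [multiset_esymm_cons_succ, multiset_esymm_zero, mul_one] at h₁
    exact eq_neg_of_add_eq_zero_right h₁
  simp only [exteriorSquareChern_cons, exteriorSquareChern_of_card_eq_four ht, ht,
    sum_range_succ, sum_range_zero, multiset_esymm_cons_succ, multiset_esymm_zero, ht₅, ha]
  ring

theorem chern_lambda2_SU5_general [CharP R 2] (hs : s.card = 5) :
    exteriorSquareChern s -
      (1 + s.esymm 2 + s.esymm 3 + (s.esymm 4 + s.esymm 2 ^ 2) + s.esymm 5
        + (s.esymm 3 ^ 2 + s.esymm 2 ^ 3) + s.esymm 2 ^ 2 * s.esymm 3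
        + (s.esymm 3 * s.esymm 5 + s.esymm 2 ^ 2 * s.esymm 4 + s.esymm 2 * s.esymm 3 ^ 2)
        + (s.esymm 3 ^ 3 + s.esymm 2 ^ 2 * s.esymm 5)
        + (s.esymm 5 ^ 2 + s.esymm 2 * s.esymm 3 * s.esymm 5 + s.esymm 3 ^ 2 * s.esymm 4))
      ∈ Ideal.span {s.esymm 1} := by
  let q := Ideal.Quotient.mk (Ideal.span {s.esymm 1})
  have hq₁ : (s.map q).esymm 1 = 0 := by
    rw [← map_multiset_esymm]
    exact Ideal.Quotient.eq_zero_iff_mem.mpr (Ideal.mem_span_singleton_self _)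
  have htwo : (2 : R ⧸ Ideal.span {s.esymm 1}) = 0 := by
    simpa only [map_ofNat, map_zero] using congrArg q (CharTwo.two_eq_zero (R := R))
  have hchern := exteriorSquareChern_of_card_eq_five_of_esymm_one_eq_zero
    ((Multiset.card_map q s).trans hs) hq₁
  simp only [← map_exteriorSquareChern, ← map_multiset_esymm] at hchern
  rw [← Ideal.Quotient.eq]
  refine hchern.trans ?_
  simp only [map_add, map_mul, map_pow, map_one]
  grind

end CommRing

/-- in `𝔽₂[t₁,…,t₅]`, `∏_{1≤j<k≤5} (1 + t_j + t_k)` is congruent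
to the displayed polynomial in `e₂,…,e₅` modulo the ideal `(e₁)`; this is the
mod 2 total Chern class of `λ² : SU(5) → SU(10)`. -/
theorem chern_lambda2_SU5 :
    (∏ p ∈ univ.filter (fun p : Fin 5 × Fin 5 => p.1 < p.2),
        (1 + X p.1 + X p.2) : MvPolynomial (Fin 5) (ZMod 2))
      - (1 + e 2 + e 3 + (e 4 + e 2 ^ 2) + e 5 + (e 3 ^ 2 + e 2 ^ 3)
          + e 2 ^ 2 * e 3
          + (e 3 * e 5 + e 2 ^ 2 * e 4 + e 2 * e 3 ^ 2)
          + (e 3 ^ 3 + e 2 ^ 2 * e 5)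
          + (e 5 ^ 2 + e 2 * e 3 * e 5 + e 3 ^ 2 * e 4))
      ∈ Ideal.span {e 1} := by
  have hmem := chern_lambda2_SU5_general (R := MvPolynomial (Fin 5) (ZMod 2))
    (s := univ.val.map X) (by simp)
  rwa [← prod_lt_eq_exteriorSquareChern, ← esymm_eq_multiset_esymm] at hmem
end
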